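/- For any initial generalized decorated metric l₀ ∈ ℝ^E, there exists a unique differentiable curve l : [0,∞) → ℝ^E with l(0) = l₀ and l'(t) = K̃(l(t)) for all t ≥ 0; that is, the extended combinatorial Ricci flow has a unique solution existing for all time. -/

import Mathlib

noncomputable section

open Real Set Filter

/-- The generalized Euclidean triangle angle `aᵢ(x)` opposite the side of length `x i`,
for a generalized triangle with (positive) side lengths `x 0, x 1, x 2`:
it is `π` if `x i ≥ x j + x k`, `0` if some other side is at least the sum of the
remaining two, and otherwise the usual Euclidean angle `arccos((xⱼ²+x_k²−xᵢ²)/(2xⱼx_k))`. -/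
noncomputable def genAngle (x : Fin 3 → ℝ) (i : Fin 3) : ℝ :=
  if x (i + 1) + x (i + 2) ≤ x i then Real.pi
  else if x i + x (i + 2) ≤ x (i + 1) ∨ x i + x (i + 1) ≤ x (i + 2) then 0
  else Real.arccos
    ((x (i + 1) ^ 2 + x (i + 2) ^ 2 - x i ^ 2) / (2 * x (i + 1) * x (i + 2)))

/-- The three side lengths `e^{(l₁₂+l₃₄)/2}, e^{(l₁₃+l₂₄)/2}, e^{(l₁₄+l₂₃)/2}` of the
generalized Euclidean triangle associated to a length vector `l ∈ ℝ⁶`.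
Edge indices: `0 ↔ {1,2}, 1 ↔ {1,3}, 2 ↔ {1,4}, 3 ↔ {2,3}, 4 ↔ {2,4}, 5 ↔ {3,4}`,
so opposite pairs of edges are `(0,5), (1,4), (2,3)`. -/
noncomputable def triSides (l : Fin 6 → ℝ) (k : Fin 3) : ℝ :=
  if k.val = 0 then Real.exp ((l 0 + l 5) / 2)
  else if k.val = 1 then Real.exp ((l 1 + l 4) / 2)
  else Real.exp ((l 2 + l 3) / 2)

/-- The quad (pair of opposite edges) containing the edge `p`. -/
def quadIndex (p : Fin 6) : Fin 3 :=
  if p.val = 0 ∨ p.val = 5 then 0 else if p.val = 1 ∨ p.val = 4 then 1 else 2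

/-- The extended dihedral angle `α_p(l)` of the generalized decorated tetrahedron with
length vector `l ∈ ℝ⁶` at the edge `p`. -/
noncomputable def dihedral (l : Fin 6 → ℝ) (p : Fin 6) : ℝ :=
  genAngle (triSides l) (quadIndex p)

/-- The edge index in `Fin 6` of the edge `{i,j}` of the tetrahedron on vertices `Fin 4`
(junk value for `i = j`). -/
def edgeOf (i j : Fin 4) : Fin 6 :=
  if (i.val = 0 ∧ j.val = 1) ∨ (i.val = 1 ∧ j.val = 0) then 0
  else if (i.val = 0 ∧ j.val = 2) ∨ (i.val = 2 ∧ j.val = 0) then 1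
  else if (i.val = 0 ∧ j.val = 3) ∨ (i.val = 3 ∧ j.val = 0) then 2
  else if (i.val = 1 ∧ j.val = 2) ∨ (i.val = 2 ∧ j.val = 1) then 3
  else if (i.val = 1 ∧ j.val = 3) ∨ (i.val = 3 ∧ j.val = 1) then 4
  else 5

/-- The two endpoints of the edge `p` of the tetrahedron. -/
def endPts (p : Fin 6) : Fin 4 × Fin 4 :=
  if p.val = 0 then (0, 1) else if p.val = 1 then (0, 2) else if p.val = 2 then (0, 3)
  else if p.val = 3 then (1, 2) else if p.val = 4 then (1, 3) else (2, 3)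

/-- The Lobachevsky function `Λ(x) = −∫₀ˣ ln|2 sin t| dt`. -/
noncomputable def lob (x : ℝ) : ℝ := -∫ t in (0:ℝ)..x, Real.log |2 * Real.sin t|

/-- The volume of the generalized decorated tetrahedron with length vector `l`. -/
noncomputable def vol6 (l : Fin 6 → ℝ) : ℝ := (1 / 2 : ℝ) * ∑ p : Fin 6, lob (dihedral l p)

/-- The co-volume function `cov(l) = 2 vol(l) + Σ α_p(l) l_p` on `ℝ⁶`. -/
noncomputable def cov6 (l : Fin 6 → ℝ) : ℝ := 2 * vol6 l + ∑ p : Fin 6, dihedral l p * l p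

/-- `𝓛 ⊂ ℝ⁶`: length vectors of genuine decorated ideal hyperbolic tetrahedra, i.e. those
whose associated generalized Euclidean triangle satisfies the strict triangle inequalities. -/
def Ldom : Set (Fin 6 → ℝ) :=
  {l | ∀ i : Fin 3, triSides l i < triSides l (i + 1) + triSides l (i + 2)}

/-- The action of `w ∈ ℝ⁴` on `l ∈ ℝ⁶`: `(w + l)_{ij} = l_{ij} + wᵢ + wⱼ`. -/
def act (w : Fin 4 → ℝ) (l : Fin 6 → ℝ) : Fin 6 → ℝ :=
  fun p => l p + w (endPts p).1 + w (endPts p).2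

/-- `ℝ̂⁴ = {w + 0 : w ∈ ℝ⁴} ⊂ ℝ⁶`. -/
def hatR4 : Set (Fin 6 → ℝ) := {x | ∃ w : Fin 4 → ℝ, x = act w 0}

/-- `i, j, k, h` are pairwise distinct, i.e. `{i,j,k,h} = {1,2,3,4}`. -/
def Distinct4 (i j k h : Fin 4) : Prop :=
  i ≠ j ∧ i ≠ k ∧ i ≠ h ∧ j ≠ k ∧ j ≠ h ∧ k ≠ h

variable {T E : Type*}

/-- The length vector in `ℝ⁶` induced on the tetrahedron `σ` by a metric `l : E → ℝ`. -/
def pullback (glue : T → Fin 6 → E) (l : E → ℝ) (σ : T) : Fin 6 → ℝ :=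
  fun p => l (glue σ p)

/-- The generalized Ricci curvature `K̃_e(l) = 2π − Σ_{σ} Σ_{p : glue σ p = e} α_p(l_σ)`. -/
noncomputable def Ric [Fintype T] [DecidableEq E] (glue : T → Fin 6 → E) (l : E → ℝ)
    (e : E) : ℝ :=
  2 * Real.pi -
    ∑ σ : T, ∑ p : Fin 6, if glue σ p = e then dihedral (pullback glue l σ) p else 0

/-- `𝓛(M,𝒯)`: the set of decorated hyperbolic polyhedral metrics. -/
def LMdom (glue : T → Fin 6 → E) : Set (E → ℝ) := {l | ∀ σ : T, pullback glue l σ ∈ Ldom}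

/-- `H̃(l) = Σ_σ cov(l_σ) − 2π Σ_e l_e`. -/
noncomputable def Htilde [Fintype T] [Fintype E] (glue : T → Fin 6 → E) (l : E → ℝ) : ℝ :=
  ∑ σ : T, cov6 (pullback glue l σ) - 2 * Real.pi * ∑ e : E, l e

/-- The valence `d_e` of an edge `e`: the number of pairs `(σ, p)` glued to `e`. -/
def valence [Fintype T] [DecidableEq E] (glue : T → Fin 6 → E) (e : E) : ℕ :=
  ∑ σ : T, ∑ p : Fin 6, if glue σ p = e then 1 else 0

/-- `(M,𝒯)` is edge-transitive: any edge can be mapped to any other edge by an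
automorphism of the triangulation. -/
def EdgeTransitive (glue : T → Fin 6 → E) : Prop :=
  ∀ e e' : E, ∃ (φ : T ≃ T) (ψ : E ≃ E) (ρ : T → Fin 4 ≃ Fin 4),
    (∀ (σ : T) (i j : Fin 4), i ≠ j →
      glue (φ σ) (edgeOf (ρ σ i) (ρ σ j)) = ψ (glue σ (edgeOf i j))) ∧ ψ e = e'

/-!
The curvature `K̃` is a dissipative vector field: `⟪K̃ l - K̃ l', l - l'⟫ ≤ 0`. Summing over the
tetrahedra, this says that the angles of a generalized triangle are monotone functions of the
logarithms `u i` of its side lengths. For a genuine triangle the law of sines turns `u i` into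
`log (sin (θ i))` up to a common constant, and `θ ↦ log ∘ sin ∘ θ` is monotone along segments of the
simplex `∑ i, θ i = π`: its derivative is the quadratic form `∑ i, x i ^ 2 * cot (θ i)`, nonnegative
on `∑ i, x i = 0` because `cot p cot q + cot q cot r + cot r cot p = 1`. A degenerate triangle has
angles `π, 0, 0`, which do not change while its longest side shrinks to the sum of the other two;
there it is a limit of genuine triangles.

`K̃` is continuous but in general not locally Lipschitz, so the Picard–Lindelöf theorem does not
apply to it. Dissipativity takes its place: trajectories of `ε`- and `δ`-approximations of `K̃`
separate at speed at most `ε + δ`, so the trajectories of smooth approximations are uniformly Cauchy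
on every `[0, n]`, and exact trajectories with equal initial values agree.
-/

section DissipativeFlow

open scoped NNReal Topology RealInnerProductSpace

/-- `x` is an `ε`-approximate solution of `x' = F x` on `s`: it has a derivative within `s` at each
point of `s`, and that derivative misses `F (x t)` by at most `ε`. -/
def IsApproxSolutionOn {V : Type*} [NormedAddCommGroup V] [NormedSpace ℝ V] (F : V → V) (ε : ℝ)
    (x : ℝ → V) (s : Set ℝ) : Prop :=
  ∀ t ∈ s, ∃ v, HasDerivWithinAt x v s t ∧ ‖v - F (x t)‖ ≤ ε

/-- A vector field `F` is dissipative if `⟪F x - F y, x - y⟫ ≤ 0`, so that its flow does not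
increase distances. -/
def Dissipative {V : Type*} [NormedAddCommGroup V] [InnerProductSpace ℝ V] (F : V → V) : Prop :=
  ∀ x y, ⟪F x - F y, x - y⟫ ≤ 0

section NormedSpace

variable {V : Type*} [NormedAddCommGroup V] [NormedSpace ℝ V] {F G : V → V} {ε : ℝ} {x : ℝ → V}
  {s : Set ℝ}

lemma isApproxSolutionOn_of_isIntegralCurveOn (hGF : ∀ z, ‖G z - F z‖ ≤ ε)
    (hx : IsIntegralCurveOn x (fun _ ↦ G) s) : IsApproxSolutionOn F ε x s :=
  fun t ht ↦ ⟨G (x t), hx t ht, hGF (x t)⟩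

lemma IsApproxSolutionOn.continuousOn (hx : IsApproxSolutionOn F ε x s) : ContinuousOn x s :=
  fun t ht ↦ (hx t ht).choose_spec.1.continuousWithinAt

lemma hasDerivWithinAt_of_tendsto_deriv {y v : ℕ → ℝ → V} {L : V} {t : ℝ} (hs : Convex ℝ s)
    (ht : t ∈ s) (hyx : ∀ r ∈ s, Tendsto (fun n ↦ y n r) atTop (𝓝 (x r)))
    (hy : ∀ n, ∀ r ∈ s, HasDerivWithinAt (y n) (v n r) s r)
    (hv : Tendsto (fun p : ℕ × ℝ ↦ v p.1 p.2) (atTop ×ˢ 𝓝[s] t) (𝓝 L)) :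
    HasDerivWithinAt x L s t := by
  rw [hasDerivWithinAt_iff_isLittleO, Asymptotics.isLittleO_iff]
  intro η hη
  obtain ⟨A, hA, U, hU, h_close⟩ := eventually_prod_iff.1
    (hv.eventually (Metric.closedBall_mem_nhds L hη))
  obtain ⟨ρ, hρ, hρU⟩ := Metric.mem_nhdsWithin_iff.1 hU
  have h_mem : ∀ᶠ r in 𝓝[s] t, r ∈ Metric.ball t ρ ∩ s :=
    inter_mem (mem_nhdsWithin_of_mem_nhds (Metric.ball_mem_nhds t hρ)) self_mem_nhdsWithin
  filter_upwards [h_mem] with r hr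
  have h_mvt : ∀ᶠ n in atTop, ‖y n r - y n t - (r - t) • L‖ ≤ η * ‖r - t‖ := by
    filter_upwards [hA] with n hn
    have h_le := ((convex_ball t ρ).inter hs).norm_image_sub_le_of_norm_hasDerivWithin_le
      (f := fun q ↦ y n q - q • L) (f' := fun q ↦ v n q - L) (C := η)
      (fun q hq ↦ ?_) (fun q hq ↦ ?_) ⟨Metric.mem_ball_self hρ, ht⟩ hr
    · convert h_le using 2
      module
    · simpa using ((hy n q hq.2).fun_sub ((hasDerivWithinAt_id q s).smul_const L)).mono
        inter_subset_right
    · simpa [dist_eq_norm] using h_close hn (hρU hq)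
  exact le_of_tendsto (((hyx r hr.2).sub (hyx t ht)).sub_const _).norm h_mvt

lemma isIntegralCurveOn_of_tendstoUniformlyOn (hF : Continuous F) {δ : ℕ → ℝ}
    (hδ : Tendsto δ atTop (𝓝 0)) (hs : Convex ℝ s) {y : ℕ → ℝ → V}
    (hy : ∀ n, IsApproxSolutionOn F (δ n) (y n) s) (hyx : TendstoUniformlyOn y x atTop s) :
    IsIntegralCurveOn x (fun _ ↦ F) s := by
  intro t ht
  have hx : ContinuousOn x s :=
    hyx.continuousOn (Frequently.of_forall fun n ↦ (hy n).continuousOn)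
  choose! v hv hvF using hy
  have h_lim : Tendsto (fun p : ℕ × ℝ ↦ y p.1 p.2) (atTop ×ˢ 𝓝[s] t) (𝓝 (x t)) :=
    tendsto_comp_of_locally_uniform_limit_within (hx t ht) tendsto_snd fun u hu ↦
      ⟨s, self_mem_nhdsWithin, tendsto_fst.eventually (hyx u hu)⟩
  have h_in : ∀ᶠ p : ℕ × ℝ in atTop ×ˢ 𝓝[s] t, p.2 ∈ s :=
    tendsto_snd.eventually eventually_mem_nhdsWithin
  have h_defect : Tendsto (fun p : ℕ × ℝ ↦ v p.1 p.2 - F (y p.1 p.2)) (atTop ×ˢ 𝓝[s] t) (𝓝 0) :=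
    squeeze_zero_norm' (h_in.mono fun p hp ↦ hvF p.1 p.2 hp) (hδ.comp tendsto_fst)
  have h_deriv : Tendsto (fun p : ℕ × ℝ ↦ v p.1 p.2) (atTop ×ˢ 𝓝[s] t) (𝓝 (F (x t))) := by
    simpa only [Function.comp_apply, sub_add_cancel, zero_add]
      using h_defect.add ((hF.tendsto _).comp h_lim)
  exact hasDerivWithinAt_of_tendsto_deriv hs ht (fun _ hr ↦ hyx.tendsto_at hr) hv h_deriv

lemma exists_isIntegralCurveOn_Icc_of_lipschitzWith [CompleteSpace V] {K : ℝ≥0} {M a b : ℝ}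
    (hG : LipschitzWith K G) (hM : ∀ z, ‖G z‖ ≤ M) (hab : a ≤ b) (x₀ : V) :
    ∃ x, x a = x₀ ∧ IsIntegralCurveOn x (fun _ ↦ G) (Icc a b) := by
  have hM₀ : 0 ≤ M := (norm_nonneg _).trans (hM 0)
  have hPL : IsPicardLindelof (fun _ ↦ G) (tmin := a) (tmax := b) ⟨a, left_mem_Icc.2 hab⟩ x₀
      ⟨M * (b - a), mul_nonneg hM₀ (sub_nonneg.2 hab)⟩ 0 ⟨M, hM₀⟩ K :=
    .of_time_independent (fun z _ ↦ hM z) hG.lipschitzOnWith (by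
      change M * max (b - a) (a - a) ≤ M * (b - a) - 0
      simp [hab])
  exact hPL.exists_eq_forall_mem_Icc_hasDerivWithinAt₀

lemma exists_hasDerivAt_eqOn_Ici {v : ℝ → V} {a : ℝ}
    (hx : ∀ t ∈ Ici a, HasDerivWithinAt x (v t) (Ici a) t) :
    ∃ y, EqOn y x (Ici a) ∧ ∀ t ∈ Ici a, HasDerivAt y (v t) t := by
  set y : ℝ → V := fun t ↦ if a ≤ t then x t else x a + (t - a) • v a
  have hy_eq : EqOn y x (Ici a) := fun t ht ↦ if_pos ht
  have hy_Ici : ∀ t ∈ Ici a, HasDerivWithinAt y (v t) (Ici a) t := fun t ht ↦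
    (hx t ht).congr hy_eq (hy_eq ht)
  refine ⟨y, hy_eq, fun t ht ↦ ?_⟩
  rcases (mem_Ici.1 ht).eq_or_lt with rfl | h_lt
  · have h_left : HasDerivWithinAt y (v a) (Iio a) a := by
      have h_line : HasDerivAt (fun t ↦ x a + (t - a) • v a) (v a) a := by
        simpa using (((hasDerivAt_id a).sub_const a).smul_const (v a)).const_add (x a)
      exact h_line.hasDerivWithinAt.congr (fun t ht ↦ if_neg (not_le.2 ht)) (by simp [y])
    simpa using h_left.union (hy_Ici a ht)
  · exact (hy_Ici t ht).hasDerivAt (Ici_mem_nhds h_lt)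

end NormedSpace

variable {V : Type*} [NormedAddCommGroup V] [InnerProductSpace ℝ V] {a b : ℝ}

lemma norm_le_of_inner_deriv_le {u u' : ℝ → V} {c : ℝ} (hc : 0 ≤ c) (hu : ContinuousOn u (Icc a b))
    (hu' : ∀ t ∈ Ico a b, HasDerivWithinAt u (u' t) (Ici t) t)
    (h : ∀ t ∈ Ico a b, ⟪u t, u' t⟫ ≤ c * ‖u t‖) {t : ℝ} (ht : t ∈ Icc a b) :
    ‖u t‖ ≤ ‖u a‖ + c * (t - a) := by
  have h_slack : ∀ δ > 0, ‖u t‖ ≤ (‖u a‖ + δ) + (c + δ) * (t - a) := by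
    intro δ hδ
    set B : ℝ → ℝ := fun s ↦ (‖u a‖ + δ) + (c + δ) * (s - a) with hB
    have hB_pos : ∀ s, a ≤ s → 0 < B s := fun s hs ↦ by
      have := sub_nonneg.2 hs
      positivity
    have hB_deriv : ∀ s, HasDerivAt (fun s ↦ B s ^ 2) (2 * B s * (c + δ)) s := fun s ↦ by
      simpa using
        ((((hasDerivAt_id s).sub_const a).const_mul (c + δ)).const_add (‖u a‖ + δ)).fun_pow 2
    have h_sq : ‖u t‖ ^ 2 ≤ B t ^ 2 := by
      refine image_le_of_deriv_right_lt_deriv_boundary' (hu.norm.pow 2)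
        (fun s hs ↦ (hu' s hs).norm_sq) ?_ (by fun_prop)
        (fun s _ ↦ (hB_deriv s).hasDerivWithinAt) ?_ ht
      · simp only [hB, sub_self, mul_zero, add_zero]
        exact pow_le_pow_left₀ (norm_nonneg _) (by linarith) 2
      · intro s hs h_eq
        have h_norm : ‖u s‖ = B s :=
          (pow_left_inj₀ (norm_nonneg _) (hB_pos s hs.1).le two_ne_zero).1 h_eq
        nlinarith [h s hs, mul_pos (hB_pos s hs.1) hδ]
    exact le_of_sq_le_sq h_sq (hB_pos t ht.1).le
  have h_cont : Tendsto (fun δ ↦ (‖u a‖ + δ) + (c + δ) * (t - a)) (𝓝[>] 0)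
      (𝓝 ((‖u a‖ + 0) + (c + 0) * (t - a))) :=
    Continuous.tendsto (by fun_prop) 0 |>.mono_left nhdsWithin_le_nhds
  simpa using ge_of_tendsto h_cont (eventually_mem_nhdsWithin.mono h_slack)

lemma Dissipative.norm_sub_le_of_isApproxSolutionOn {F : V → V} (hF : Dissipative F) {ε δ : ℝ}
    {x y : ℝ → V} (hx : IsApproxSolutionOn F ε x (Icc a b))
    (hy : IsApproxSolutionOn F δ y (Icc a b)) {t : ℝ} (ht : t ∈ Icc a b) :
    ‖x t - y t‖ ≤ ‖x a - y a‖ + (ε + δ) * (t - a) := by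
  have hx_cont := hx.continuousOn
  have hy_cont := hy.continuousOn
  choose! v hv hvF using hx
  choose! w hw hwF using hy
  refine norm_le_of_inner_deriv_le (u := fun s ↦ x s - y s) (u' := fun s ↦ v s - w s)
    (add_nonneg ((norm_nonneg _).trans (hvF t ht)) ((norm_nonneg _).trans (hwF t ht)))
    (hx_cont.sub hy_cont) (fun s hs ↦ ?_) (fun s hs ↦ ?_) ht
  · have hs' := Ico_subset_Icc_self hs
    exact ((hv s hs').sub (hw s hs')).mono_of_mem_nhdsWithin (Icc_mem_nhdsGE_of_mem hs)
  · have hs' := Ico_subset_Icc_self hs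
    calc ⟪x s - y s, v s - w s⟫
        = ⟪F (x s) - F (y s), x s - y s⟫
            + ⟪x s - y s, (v s - F (x s)) - (w s - F (y s))⟫ := by
          rw [real_inner_comm (x s - y s) (F (x s) - F (y s)), ← inner_add_right]; congr 1; abel
      _ ≤ 0 + ‖x s - y s‖ * ‖(v s - F (x s)) - (w s - F (y s))‖ :=
          add_le_add (hF _ _) (real_inner_le_norm _ _)
      _ ≤ (ε + δ) * ‖x s - y s‖ := by
          rw [zero_add, mul_comm]
          gcongr
          exact (norm_sub_le _ _).trans (add_le_add (hvF s hs') (hwF s hs'))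

lemma Dissipative.eqOn_of_isIntegralCurveOn {F : V → V} (hF : Dissipative F) {x y : ℝ → V}
    (hx : IsIntegralCurveOn x (fun _ ↦ F) (Icc a b))
    (hy : IsIntegralCurveOn y (fun _ ↦ F) (Icc a b)) (h : x a = y a) : EqOn x y (Icc a b) := by
  have h_exact : ∀ z, ‖F z - F z‖ ≤ 0 := by simp
  intro t ht
  simpa [h, sub_eq_zero] using hF.norm_sub_le_of_isApproxSolutionOn
    (isApproxSolutionOn_of_isIntegralCurveOn h_exact hx)
    (isApproxSolutionOn_of_isIntegralCurveOn h_exact hy) ht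

lemma exists_isIntegralCurveOn_Icc_of_inner_le [FiniteDimensional ℝ V] {G : V → V}
    (hG : ContDiff ℝ 1 G) {x₀ : V} {C : ℝ} (hC : 0 ≤ C)
    (h : ∀ z, ⟪G z, z - x₀⟫ ≤ C * ‖z - x₀‖) (hab : a ≤ b) :
    ∃ x, x a = x₀ ∧ IsIntegralCurveOn x (fun _ ↦ G) (Icc a b) := by
  have hR : 0 < C * (b - a) + 1 := by
    have := sub_nonneg.2 hab
    positivity
  -- Multiplying `G` by the cutoff `χ` makes it bounded and Lipschitz; the growth bound keeps the
  -- trajectory in the ball where `χ = 1`.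
  let χ : ContDiffBump x₀ := ⟨C * (b - a) + 1, C * (b - a) + 2, hR, by linarith⟩
  have hχG_smooth : ContDiff ℝ 1 fun z ↦ χ z • G z := χ.contDiff.smul hG
  have hχG_supp : HasCompactSupport fun z ↦ χ z • G z := χ.hasCompactSupport.smul_right
  obtain ⟨M, hM⟩ := hχG_smooth.continuous.bounded_above_of_compact_support hχG_supp
  obtain ⟨K, hK⟩ := hχG_smooth.lipschitzWith_of_hasCompactSupport hχG_supp one_ne_zero
  obtain ⟨x, hxa, hx⟩ := exists_isIntegralCurveOn_Icc_of_lipschitzWith hK hM hab x₀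
  refine ⟨x, hxa, fun t ht ↦ ?_⟩
  have h_growth : ∀ z, ⟪z - x₀, χ z • G z⟫ ≤ C * ‖z - x₀‖ := fun z ↦ by
    rw [real_inner_smul_right, real_inner_comm]
    calc χ z * ⟪G z, z - x₀⟫ ≤ χ z * (C * ‖z - x₀‖) := mul_le_mul_of_nonneg_left (h z) χ.nonneg
      _ ≤ C * ‖z - x₀‖ := mul_le_of_le_one_left (by positivity) χ.le_one
  have h_dist : ‖x t - x₀‖ ≤ C * (t - a) := by
    simpa [hxa] using norm_le_of_inner_deriv_le (u := fun s ↦ x s - x₀) hC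
      (fun s hs ↦ (hx s hs).continuousWithinAt.sub_const _)
      (fun s hs ↦ ((hx s (Ico_subset_Icc_self hs)).sub_const _).mono_of_mem_nhdsWithin
        (Icc_mem_nhdsGE_of_mem hs))
      (fun s _ ↦ h_growth (x s)) ht
  have hχ : χ (x t) = 1 := by
    refine χ.one_of_mem_closedBall (mem_closedBall_iff_norm.2 (h_dist.trans ?_))
    change C * (t - a) ≤ C * (b - a) + 1
    nlinarith [ht.2]
  simpa [hχ] using hx t ht

lemma Dissipative.exists_isApproxSolutionOn_Icc [FiniteDimensional ℝ V] {F : V → V}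
    (hF : Dissipative F) (hF_cont : Continuous F) {ε : ℝ} (hε : 0 < ε) (hab : a ≤ b) (x₀ : V) :
    ∃ x, x a = x₀ ∧ IsApproxSolutionOn F ε x (Icc a b) := by
  obtain ⟨G, hG, hGF, -⟩ :=
    hF_cont.exists_contDiff_approx 1 (ε := fun _ ↦ ε) continuous_const fun _ ↦ hε
  replace hGF : ∀ z, ‖G z - F z‖ ≤ ε := fun z ↦ (dist_eq_norm (G z) (F z)).symm.trans_le (hGF z).le
  have h_growth : ∀ z, ⟪G z, z - x₀⟫ ≤ (ε + ‖F x₀‖) * ‖z - x₀‖ := fun z ↦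
    calc ⟪G z, z - x₀⟫ = ⟪F z - F x₀, z - x₀⟫ + ⟪(G z - F z) + F x₀, z - x₀⟫ := by
          rw [← inner_add_left]; congr 1; abel
      _ ≤ 0 + ‖(G z - F z) + F x₀‖ * ‖z - x₀‖ := add_le_add (hF _ _) (real_inner_le_norm _ _)
      _ ≤ (ε + ‖F x₀‖) * ‖z - x₀‖ := by
          rw [zero_add]
          gcongr
          exact (norm_add_le _ _).trans (by gcongr; exact hGF z)
  obtain ⟨x, hxa, hx⟩ := exists_isIntegralCurveOn_Icc_of_inner_le hG (by positivity) h_growth hab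
  exact ⟨x, hxa, isApproxSolutionOn_of_isIntegralCurveOn hGF hx⟩

lemma Dissipative.exists_isIntegralCurveOn_Icc [FiniteDimensional ℝ V] {F : V → V}
    (hF : Dissipative F) (hF_cont : Continuous F) (hab : a ≤ b) (x₀ : V) :
    ∃ x, x a = x₀ ∧ IsIntegralCurveOn x (fun _ ↦ F) (Icc a b) := by
  set ε : ℕ → ℝ := fun n ↦ 1 / ((n : ℝ) + 1)
  have hε_lim : Tendsto ε atTop (𝓝 0) := tendsto_one_div_add_atTop_nhds_zero_nat
  choose y hya hy using fun n ↦
    hF.exists_isApproxSolutionOn_Icc hF_cont (ε := ε n) (by positivity) hab x₀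
  have h_dist : ∀ n m, ∀ t ∈ Icc a b, ‖y n t - y m t‖ ≤ (ε n + ε m) * (b - a) := fun n m t ht ↦ by
    have h_le := hF.norm_sub_le_of_isApproxSolutionOn (hy n) (hy m) ht
    rw [hya, hya, sub_self, norm_zero, zero_add] at h_le
    exact h_le.trans (by gcongr; exact ht.2)
  have h_cauchy : UniformCauchySeqOn y atTop (Icc a b) := by
    have h_bound : Tendsto (fun p : ℕ × ℕ ↦ (ε p.1 + ε p.2) * (b - a)) (atTop ×ˢ atTop) (𝓝 0) := by
      simpa using ((hε_lim.comp tendsto_fst).add (hε_lim.comp tendsto_snd)).mul_const (b - a)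
    intro u hu
    obtain ⟨η, hη, hηu⟩ := Metric.mem_uniformity_dist.1 hu
    filter_upwards [h_bound.eventually_lt_const hη] with p hp t ht
    exact hηu (by simpa only [dist_eq_norm] using (h_dist p.1 p.2 t ht).trans_lt hp)
  choose! x hx using fun t (ht : t ∈ Icc a b) ↦
    cauchySeq_tendsto_of_complete (h_cauchy.cauchySeq ht)
  refine ⟨x, ?_, isIntegralCurveOn_of_tendstoUniformlyOn hF_cont hε_lim (convex_Icc a b) hy
    (h_cauchy.tendstoUniformlyOn_of_tendsto hx)⟩
  exact tendsto_nhds_unique (hx a (left_mem_Icc.2 hab)) (by simp [hya])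

lemma Dissipative.exists_isIntegralCurveOn_Ici [FiniteDimensional ℝ V] {F : V → V}
    (hF : Dissipative F) (hF_cont : Continuous F) (x₀ : V) :
    ∃ x, x 0 = x₀ ∧ IsIntegralCurveOn x (fun _ ↦ F) (Ici 0) := by
  choose X hX₀ hX using fun n : ℕ ↦
    hF.exists_isIntegralCurveOn_Icc hF_cont (Nat.cast_nonneg (α := ℝ) n) x₀
  have h_agree : ∀ {m n : ℕ}, m ≤ n → EqOn (X m) (X n) (Icc 0 m) := fun hmn ↦
    hF.eqOn_of_isIntegralCurveOn (hX _)
      ((hX _).mono (Icc_subset_Icc_right (Nat.cast_le.2 hmn))) ((hX₀ _).trans (hX₀ _).symm)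
  set x : ℝ → V := fun t ↦ X ⌈t⌉₊ t
  have hxX : ∀ n : ℕ, EqOn x (X n) (Icc 0 n) := fun n t ht ↦
    h_agree (Nat.ceil_le.2 ht.2) ⟨ht.1, Nat.le_ceil t⟩
  refine ⟨x, by simp [x, hX₀], fun t ht ↦ ?_⟩
  obtain ⟨n, hn⟩ := exists_nat_gt t
  have ht' : t ∈ Icc 0 (n : ℝ) := ⟨ht, hn.le⟩
  have h_deriv : HasDerivWithinAt x (F (x t)) (Icc 0 n) t := by
    rw [hxX n ht']
    exact (hX n t ht').congr (hxX n) (hxX n ht')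
  refine h_deriv.mono_of_mem_nhdsWithin ?_
  filter_upwards [self_mem_nhdsWithin, mem_nhdsWithin_of_mem_nhds (Iic_mem_nhds hn)] with s h₀ h₁
  exact ⟨h₀, h₁⟩

theorem Dissipative.existence_uniqueness_forward [FiniteDimensional ℝ V] {F : V → V}
    (hF : Dissipative F) (hF_cont : Continuous F) (x₀ : V) :
    ∃ x : ℝ → V, (x 0 = x₀ ∧ ∀ t, 0 ≤ t → HasDerivAt x (F (x t)) t) ∧
      ∀ y : ℝ → V, (y 0 = x₀ ∧ ∀ t, 0 ≤ t → HasDerivAt y (F (y t)) t) →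
        ∀ t, 0 ≤ t → x t = y t := by
  obtain ⟨z, hz₀, hz⟩ := hF.exists_isIntegralCurveOn_Ici hF_cont x₀
  obtain ⟨x, hxz, hx⟩ := exists_hasDerivAt_eqOn_Ici hz
  replace hx : ∀ t, 0 ≤ t → HasDerivAt x (F (x t)) t := fun t ht ↦ by
    simpa only [hxz ht] using hx t ht
  have hx₀ : x 0 = x₀ := (hxz self_mem_Ici).trans hz₀
  refine ⟨x, ⟨hx₀, hx⟩, fun y ⟨hy₀, hy⟩ t ht ↦ ?_⟩
  exact hF.eqOn_of_isIntegralCurveOn (fun s hs ↦ (hx s hs.1).hasDerivWithinAt)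
    (fun s hs ↦ (hy s hs.1).hasDerivWithinAt) (hx₀.trans hy₀.symm) ⟨ht, le_rfl⟩

theorem existence_uniqueness_forward_of_sum_nonpos {ι : Type*} [Fintype ι]
    {F : (ι → ℝ) → (ι → ℝ)} (hF : ∀ x y, ∑ i, (F x i - F y i) * (x i - y i) ≤ 0)
    (hF_cont : Continuous F) (x₀ : ι → ℝ) :
    ∃ x : ℝ → ι → ℝ, (x 0 = x₀ ∧ ∀ t, 0 ≤ t → HasDerivAt x (F (x t)) t) ∧
      ∀ y : ℝ → ι → ℝ, (y 0 = x₀ ∧ ∀ t, 0 ≤ t → HasDerivAt y (F (y t)) t) →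
        ∀ t, 0 ≤ t → x t = y t := by
  let e := PiLp.continuousLinearEquiv 2 ℝ fun _ : ι ↦ ℝ
  have h_diss : Dissipative fun z ↦ e.symm (F (e z)) := fun x y ↦ by
    simpa [PiLp.inner_apply, mul_comm, e] using hF (e x) (e y)
  obtain ⟨x, ⟨hx₀, hx⟩, h_unique⟩ := h_diss.existence_uniqueness_forward (by fun_prop) (e.symm x₀)
  refine ⟨fun t ↦ e (x t), ⟨by simp [hx₀], fun t ht ↦ ?_⟩, fun y ⟨hy₀, hy⟩ t ht ↦ ?_⟩
  · simpa [Function.comp_def] using e.hasFDerivAt.comp_hasDerivAt t (hx t ht)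
  · refine (e.eq_symm_apply).1 (h_unique (fun t ↦ e.symm (y t)) ⟨by simp [hy₀], fun s hs ↦ ?_⟩ t ht)
    simpa [Function.comp_def] using e.symm.hasFDerivAt.comp_hasDerivAt s (hy s hs)

end DissipativeFlow

section TriangleAngles

open scoped EuclideanGeometry Topology

/-- The strict triangle inequalities for three side lengths. -/
def StrictTriangle (x : Fin 3 → ℝ) : Prop := ∀ i, x i < x (i + 1) + x (i + 2)

lemma fin_three_add_add (i : Fin 3) :
    i + 1 + 1 = i + 2 ∧ i + 1 + 2 = i ∧ i + 2 + 1 = i ∧ i + 2 + 2 = i + 1 := by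
  decide +revert

lemma strictTriangle_iff_abs_sub_lt {x : Fin 3 → ℝ} (i : Fin 3) :
    StrictTriangle x ↔ |x (i + 1) - x (i + 2)| < x i ∧ x i < x (i + 1) + x (i + 2) := by
  constructor
  · intro hx
    have h₁ := hx (i + 1)
    have h₂ := hx (i + 2)
    simp only [fin_three_add_add] at h₁ h₂
    exact ⟨abs_sub_lt_iff.2 ⟨by linarith, by linarith⟩, hx i⟩
  · rintro ⟨h_abs, hi⟩ k
    rw [abs_sub_lt_iff] at h_abs
    obtain rfl | rfl | rfl : k = i ∨ k = i + 1 ∨ k = i + 2 := by grind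
    · exact hi
    all_goals
      simp only [fin_three_add_add]
      linarith

lemma StrictTriangle.pos {x : Fin 3 → ℝ} (hx : StrictTriangle x) (i : Fin 3) : 0 < x i :=
  (abs_nonneg _).trans_lt ((strictTriangle_iff_abs_sub_lt i).1 hx).1

lemma genAngle_eq_arccos {x : Fin 3 → ℝ} (hx : ∀ i, 0 < x i) (i : Fin 3) :
    genAngle x i =
      arccos ((x (i + 1) ^ 2 + x (i + 2) ^ 2 - x i ^ 2) / (2 * x (i + 1) * x (i + 2))) := by
  have hi := hx i
  have hj := hx (i + 1)
  have hk := hx (i + 2)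
  rw [genAngle]
  split_ifs with h_long h_short
  · rw [arccos_of_le_neg_one]
    rw [div_le_iff₀ (by positivity)]
    nlinarith
  · rw [arccos_of_one_le]
    rw [le_div_iff₀ (by positivity)]
    rcases h_short with h | h <;> nlinarith
  · rfl

lemma genAngle_le_pi (x : Fin 3 → ℝ) (i : Fin 3) : genAngle x i ≤ π := by
  rw [genAngle]
  split_ifs
  · rfl
  · exact pi_pos.le
  · exact arccos_le_pi _

lemma genAngle_of_add_le {x : Fin 3 → ℝ} (hx : ∀ i, 0 < x i) {i : Fin 3}
    (h : x (i + 1) + x (i + 2) ≤ x i) : genAngle x = Pi.single i π := by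
  funext j
  have h₁ := hx (i + 1)
  have h₂ := hx (i + 2)
  obtain rfl | rfl | rfl : j = i ∨ j = i + 1 ∨ j = i + 2 := by grind
  · rw [genAngle, if_pos h, Pi.single_eq_same]
  all_goals
    rw [Pi.single_eq_of_ne (by grind), genAngle]
    simp only [fin_three_add_add]
    rw [if_neg (by linarith), if_pos (by grind)]

lemma StrictTriangle.genAngle_pos {x : Fin 3 → ℝ} (hx : StrictTriangle x) (i : Fin 3) :
    0 < genAngle x i := by
  have hj := hx.pos (i + 1)
  have hk := hx.pos (i + 2)
  have h_lt := ((strictTriangle_iff_abs_sub_lt i).1 hx).1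
  have h_sq := sq_lt_sq' (neg_lt_of_abs_lt h_lt) (lt_of_abs_lt h_lt)
  rw [genAngle_eq_arccos hx.pos, arccos_pos, div_lt_one (by positivity)]
  linarith

lemma StrictTriangle.exists_dist_eq {x : Fin 3 → ℝ} (hx : StrictTriangle x) :
    ∃ p : Fin 3 → ℂ, ∀ i, dist (p (i + 1)) (p (i + 2)) = x i := by
  have h₀ := hx.pos 0
  have h₁ := hx.pos 1
  have h₂ := hx.pos 2
  set c := (x 1 ^ 2 + x 2 ^ 2 - x 0 ^ 2) / (2 * x 1 * x 2) with hc
  have h_cos : cos (arccos c) = c := by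
    have hx₀ : x 0 < x 1 + x 2 := hx 0
    have hx₁ : x 1 < x 2 + x 0 := hx 1
    have hx₂ : x 2 < x 0 + x 1 := hx 2
    refine cos_arccos ?_ ?_
    · rw [hc, le_div_iff₀ (by positivity)]
      nlinarith
    · rw [hc, div_le_one (by positivity)]
      nlinarith
  refine ⟨![0, x 2, x 1 * Complex.exp (arccos c * Complex.I)], fun i ↦ ?_⟩
  fin_cases i
  · change dist (x 2 : ℂ) (x 1 * Complex.exp (arccos c * Complex.I)) = x 0
    rw [← sq_eq_sq₀ dist_nonneg h₀.le, Complex.dist_eq, Complex.sq_norm, Complex.normSq_apply]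
    simp only [Complex.sub_re, Complex.sub_im, Complex.ofReal_re, Complex.ofReal_im,
      Complex.re_ofReal_mul, Complex.im_ofReal_mul, Complex.exp_ofReal_mul_I_re,
      Complex.exp_ofReal_mul_I_im]
    have h_pyth := sin_sq_add_cos_sq (arccos c)
    have h_law : 2 * x 1 * x 2 * c = x 1 ^ 2 + x 2 ^ 2 - x 0 ^ 2 := by
      rw [hc]; field_simp
    rw [h_cos] at h_pyth ⊢
    linear_combination x 1 ^ 2 * h_pyth - h_law
  · change dist (x 1 * Complex.exp (arccos c * Complex.I)) 0 = x 1
    simp [Complex.norm_exp_ofReal_mul_I, h₁.le]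
  · change dist (0 : ℂ) (x 2) = x 2
    simp [h₂.le]

lemma genAngle_eq_angle {V P : Type*} [NormedAddCommGroup V] [InnerProductSpace ℝ V] [MetricSpace P]
    [NormedAddTorsor V P] {x : Fin 3 → ℝ} (hx : ∀ i, 0 < x i) {p : Fin 3 → P}
    (hp : ∀ i, dist (p (i + 1)) (p (i + 2)) = x i) (i : Fin 3) :
    genAngle x i = ∠ (p (i + 1)) (p i) (p (i + 2)) := by
  have h_law := EuclideanGeometry.law_cos (p (i + 1)) (p i) (p (i + 2))
  have hj := hp (i + 1)
  have hk := hp (i + 2)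
  simp only [fin_three_add_add] at hj hk
  rw [hp i, dist_comm _ (p i), hj, hk] at h_law
  have := hx (i + 1)
  have := hx (i + 2)
  rw [genAngle_eq_arccos hx, ← arccos_cos (EuclideanGeometry.angle_nonneg _ _ _)
    (EuclideanGeometry.angle_le_pi _ _ _)]
  congr 1
  rw [div_eq_iff (by positivity)]
  linarith

lemma StrictTriangle.sum_genAngle {x : Fin 3 → ℝ} (hx : StrictTriangle x) :
    ∑ i, genAngle x i = π := by
  obtain ⟨p, hp⟩ := hx.exists_dist_eq
  have h_ne : p 1 ≠ p 2 := dist_pos.1 ((hp 0).symm ▸ hx.pos 0)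
  rw [Fin.sum_univ_three]
  simp only [genAngle_eq_angle hx.pos hp]
  have h_sum := EuclideanGeometry.angle_add_angle_add_angle_eq_pi (p 0) h_ne.symm
  change ∠ (p 1) (p 0) (p 2) + ∠ (p 2) (p 1) (p 0) + ∠ (p 0) (p 2) (p 1) = π
  rw [EuclideanGeometry.angle_comm (p 1), EuclideanGeometry.angle_comm (p 2) (p 1),
    EuclideanGeometry.angle_comm (p 0) (p 2)]
  linarith

lemma sin_pos_of_sum_eq_pi {θ : Fin 3 → ℝ} (hθ : ∀ i, 0 < θ i) (h_sum : ∑ i, θ i = π) (i : Fin 3) :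
    0 < sin (θ i) := by
  refine sin_pos_of_pos_of_lt_pi (hθ i) (h_sum ▸ ?_)
  exact Finset.single_lt_sum (show i + 1 ≠ i by grind) (Finset.mem_univ _) (Finset.mem_univ _)
    (hθ _) fun k _ _ ↦ (hθ k).le

lemma StrictTriangle.exists_sin_genAngle_eq {x : Fin 3 → ℝ} (hx : StrictTriangle x) :
    ∃ κ > 0, ∀ i, sin (genAngle x i) = κ * x i := by
  obtain ⟨p, hp⟩ := hx.exists_dist_eq
  have h_law : ∀ i, sin (genAngle x i) * x (i + 2) = sin (genAngle x (i + 2)) * x i := fun i ↦ by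
    have h := EuclideanGeometry.law_sin (p (i + 2)) (p i) (p (i + 1))
    rw [genAngle_eq_angle hx.pos hp, genAngle_eq_angle hx.pos hp, ← hp (i + 2), ← hp i]
    simp only [fin_three_add_add]
    rwa [EuclideanGeometry.angle_comm (p (i + 1)) (p i), EuclideanGeometry.angle_comm (p i)]
  have h_sin := sin_pos_of_sum_eq_pi hx.genAngle_pos hx.sum_genAngle 0
  have h_two : sin (genAngle x 0) * x 2 = sin (genAngle x 2) * x 0 := h_law 0
  have h_one : sin (genAngle x 1) * x 0 = sin (genAngle x 0) * x 1 := h_law 1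
  have h_pos := hx.pos 0
  refine ⟨sin (genAngle x 0) / x 0, div_pos h_sin h_pos, fun i ↦ ?_⟩
  rw [div_mul_eq_mul_div, eq_div_iff h_pos.ne']
  fin_cases i
  exacts [rfl, h_one, h_two.symm]

lemma cot_add_cot {x y : ℝ} (hx : sin x ≠ 0) (hy : sin y ≠ 0) :
    cot x + cot y = sin (x + y) / (sin x * sin y) := by
  rw [cot_eq_cos_div_sin, cot_eq_cos_div_sin, sin_add]
  field_simp
  ring

lemma cot_mul_cot_add_of_add_eq_pi {x y z : ℝ} (hx : sin x ≠ 0) (hy : sin y ≠ 0) (hz : sin z ≠ 0)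
    (h : x + y + z = π) : cot x * cot y + cot y * cot z + cot z * cot x = 1 := by
  obtain rfl : z = π - (x + y) := by linarith
  rw [sin_pi_sub, sin_add] at hz
  simp only [cot_eq_cos_div_sin, sin_pi_sub, cos_pi_sub, sin_add, cos_add]
  field_simp
  ring

lemma sum_sq_mul_cot_nonneg {θ x : Fin 3 → ℝ} (hθ : ∀ i, 0 < θ i) (hθ_sum : ∑ i, θ i = π)
    (hx_sum : ∑ i, x i = 0) : 0 ≤ ∑ i, x i ^ 2 * cot (θ i) := by
  have h_sin := sin_pos_of_sum_eq_pi hθ hθ_sum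
  have h_ne := fun i ↦ (h_sin i).ne'
  rw [Fin.sum_univ_three] at hθ_sum hx_sum ⊢
  have h_cot := cot_mul_cot_add_of_add_eq_pi (h_ne 0) (h_ne 1) (h_ne 2) hθ_sum
  have h_pos : 0 < cot (θ 0) + cot (θ 2) := by
    rw [cot_add_cot (h_ne 0) (h_ne 2), show θ 0 + θ 2 = π - θ 1 by linarith, sin_pi_sub]
    exact div_pos (h_sin 1) (mul_pos (h_sin 0) (h_sin 2))
  have h_two : x 2 = -(x 0 + x 1) := by linarith
  refine nonneg_of_mul_nonneg_right (a := cot (θ 0) + cot (θ 2)) ?_ h_pos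
  calc 0 ≤ ((cot (θ 0) + cot (θ 2)) * x 0 + cot (θ 2) * x 1) ^ 2 + x 1 ^ 2 := by positivity
    _ = (cot (θ 0) + cot (θ 2)) *
          (x 0 ^ 2 * cot (θ 0) + x 1 ^ 2 * cot (θ 1) + x 2 ^ 2 * cot (θ 2)) := by
        rw [h_two]
        linear_combination -x 1 ^ 2 * h_cot

lemma sum_sub_mul_log_sin_sub_nonneg {θ φ : Fin 3 → ℝ} (hθ : ∀ i, 0 < θ i)
    (hθ_sum : ∑ i, θ i = π) (hφ : ∀ i, 0 < φ i) (hφ_sum : ∑ i, φ i = π) :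
    0 ≤ ∑ i, (θ i - φ i) * (log (sin (θ i)) - log (sin (φ i))) := by
  set γ : ℝ → Fin 3 → ℝ := fun t i ↦ φ i + t * (θ i - φ i) with hγ
  have hγ_pos : ∀ t ∈ Icc (0 : ℝ) 1, ∀ i, 0 < γ t i := fun t ht i ↦ by
    simpa only [hγ, smul_eq_mul, mem_Ioi] using
      (convex_Ioi (0 : ℝ)).add_smul_sub_mem (hφ i) (hθ i) ht
  have h_diff_sum : ∑ i, (θ i - φ i) = 0 := by rw [Finset.sum_sub_distrib, hθ_sum, hφ_sum, sub_self]
  have hγ_sum : ∀ t, ∑ i, γ t i = π := fun t ↦ by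
    simp only [hγ, Finset.sum_add_distrib, ← Finset.mul_sum, h_diff_sum, hφ_sum, mul_zero, add_zero]
  have h_deriv : ∀ t ∈ Icc (0 : ℝ) 1, HasDerivAt (fun s ↦ ∑ i, (θ i - φ i) * log (sin (γ s i)))
      (∑ i, (θ i - φ i) ^ 2 * cot (γ t i)) t := fun t ht ↦ by
    refine HasDerivAt.fun_sum fun i _ ↦ ?_
    have h_line : HasDerivAt (fun s ↦ γ s i) (θ i - φ i) t := by
      simpa only [id, one_mul] using ((hasDerivAt_id t).mul_const (θ i - φ i)).const_add (φ i)
    refine ((h_line.sin.log (sin_pos_of_sum_eq_pi (hγ_pos t ht) (hγ_sum t) i).ne').const_mul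
      (θ i - φ i)).congr_deriv ?_
    rw [cot_eq_cos_div_sin]
    ring
  have h_mono : MonotoneOn (fun s ↦ ∑ i, (θ i - φ i) * log (sin (γ s i))) (Icc 0 1) :=
    monotoneOn_of_hasDerivWithinAt_nonneg (convex_Icc 0 1)
      (fun t ht ↦ (h_deriv t ht).continuousAt.continuousWithinAt)
      (fun t ht ↦ (h_deriv t (interior_subset ht)).hasDerivWithinAt)
      (fun t ht ↦ sum_sq_mul_cot_nonneg (hγ_pos t (interior_subset ht)) (hγ_sum t) h_diff_sum)
  have h_le := h_mono (left_mem_Icc.2 zero_le_one) (right_mem_Icc.2 zero_le_one) zero_le_one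
  simp only [hγ, zero_mul, one_mul, add_zero, add_sub_cancel] at h_le
  simpa only [mul_sub, Finset.sum_sub_distrib, sub_nonneg] using h_le

/-- The generalized angles of the triangle with side lengths `exp (u i)`, as a function of the
logarithmic side lengths `u`, in which they are monotone. -/
def logAngle (u : Fin 3 → ℝ) : Fin 3 → ℝ := genAngle fun k ↦ exp (u k)

lemma continuous_logAngle : Continuous logAngle := by
  refine continuous_pi fun i ↦ ?_
  simp only [logAngle, genAngle_eq_arccos fun _ ↦ exp_pos _]
  refine continuous_arccos.comp (Continuous.div (by fun_prop) (by fun_prop) fun u ↦ ?_)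
  positivity

lemma logAngle_of_log_le {u : Fin 3 → ℝ} {i : Fin 3}
    (h : log (exp (u (i + 1)) + exp (u (i + 2))) ≤ u i) : logAngle u = Pi.single i π :=
  genAngle_of_add_le (fun k ↦ exp_pos (u k)) ((log_le_iff_le_exp (by positivity)).1 h)

lemma sum_logAngle_sub_mul_sub_nonneg_of_strictTriangle {u v : Fin 3 → ℝ}
    (hu : StrictTriangle fun k ↦ exp (u k)) (hv : StrictTriangle fun k ↦ exp (v k)) :
    0 ≤ ∑ i, (logAngle u i - logAngle v i) * (u i - v i) := by
  obtain ⟨κ, hκ, hκu⟩ := hu.exists_sin_genAngle_eq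
  obtain ⟨μ, hμ, hμv⟩ := hv.exists_sin_genAngle_eq
  calc 0 ≤ ∑ i, (logAngle u i - logAngle v i) *
          (log (sin (logAngle u i)) - log (sin (logAngle v i))) :=
        sum_sub_mul_log_sin_sub_nonneg hu.genAngle_pos hu.sum_genAngle hv.genAngle_pos
          hv.sum_genAngle
    _ = ∑ i, ((logAngle u i - logAngle v i) * (u i - v i) +
          (logAngle u i - logAngle v i) * (log κ - log μ)) := by
        refine Finset.sum_congr rfl fun i _ ↦ ?_
        rw [logAngle, logAngle, hκu, hμv, log_mul hκ.ne' (exp_ne_zero _),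
          log_mul hμ.ne' (exp_ne_zero _), log_exp, log_exp]
        ring
    _ = ∑ i, (logAngle u i - logAngle v i) * (u i - v i) := by
        rw [Finset.sum_add_distrib, ← Finset.sum_mul, Finset.sum_sub_distrib, logAngle, logAngle,
          hu.sum_genAngle, hv.sum_genAngle, sub_self, zero_mul, add_zero]

lemma eventually_strictTriangle_exp_update (u : Fin 3 → ℝ) (i : Fin 3) :
    ∀ᶠ s in 𝓝[<] log (exp (u (i + 1)) + exp (u (i + 2))),
      StrictTriangle fun k ↦ exp (Function.update u i s k) := by
  set m := log (exp (u (i + 1)) + exp (u (i + 2)))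
  have h_exp : exp m = exp (u (i + 1)) + exp (u (i + 2)) := exp_log (by positivity)
  have h_abs : |exp (u (i + 1)) - exp (u (i + 2))| < exp m := by
    rw [h_exp, abs_sub_lt_iff]
    constructor <;> linarith [exp_pos (u (i + 1)), exp_pos (u (i + 2))]
  have h_near := (continuous_exp.tendsto m).eventually (lt_mem_nhds h_abs)
  filter_upwards [nhdsWithin_le_nhds h_near, self_mem_nhdsWithin] with s hs hsm
  rw [strictTriangle_iff_abs_sub_lt i, Function.update_self,
    Function.update_of_ne (show i + 1 ≠ i by grind),
    Function.update_of_ne (show i + 2 ≠ i by grind)]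
  exact ⟨hs, h_exp ▸ exp_lt_exp.2 hsm⟩

lemma sum_logAngle_sub_mul_sub_nonneg_of_forall_strictTriangle {v : Fin 3 → ℝ}
    (hv : ∀ u : Fin 3 → ℝ, (StrictTriangle fun k ↦ exp (u k)) →
      0 ≤ ∑ i, (logAngle u i - logAngle v i) * (u i - v i)) (u : Fin 3 → ℝ) :
    0 ≤ ∑ i, (logAngle u i - logAngle v i) * (u i - v i) := by
  by_cases hu : StrictTriangle fun k ↦ exp (u k)
  · exact hv u hu
  obtain ⟨i, hi⟩ : ∃ i, log (exp (u (i + 1)) + exp (u (i + 2))) ≤ u i := by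
    simp only [StrictTriangle, not_forall, not_lt] at hu
    exact hu.imp fun i hi ↦ (log_le_iff_le_exp (by positivity)).2 hi
  -- Shrinking the longest side until the triangle is just degenerate does not change the angles.
  set m := log (exp (u (i + 1)) + exp (u (i + 2)))
  set w := Function.update u i m with hw
  have h_angle_u : logAngle u = Pi.single i π := logAngle_of_log_le hi
  have h_angle_w : logAngle w = Pi.single i π := by
    refine logAngle_of_log_le ?_
    rw [hw, Function.update_self, Function.update_of_ne (show i + 1 ≠ i by grind),
      Function.update_of_ne (show i + 2 ≠ i by grind)]
  have h_limit : 0 ≤ ∑ k, (logAngle w k - logAngle v k) * (w k - v k) := by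
    have h_cont : Continuous fun s ↦ ∑ k, (logAngle (Function.update u i s) k - logAngle v k) *
        (Function.update u i s k - v k) := by
      have := continuous_logAngle
      fun_prop
    exact ge_of_tendsto ((h_cont.tendsto m).mono_left nhdsWithin_le_nhds)
      ((eventually_strictTriangle_exp_update u i).mono fun s hs ↦ hv _ hs)
  have h_shrink : 0 ≤ (π - logAngle v i) * (u i - m) :=
    mul_nonneg (sub_nonneg.2 (genAngle_le_pi _ i)) (sub_nonneg.2 hi)
  have h_split : ∑ k, (logAngle u k - logAngle v k) * (u k - v k) =
      ∑ k, (logAngle w k - logAngle v k) * (w k - v k) + (π - logAngle v i) * (u i - m) := by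
    rw [← sub_eq_iff_eq_add', ← Finset.sum_sub_distrib, Finset.sum_eq_single i]
    · rw [h_angle_u, h_angle_w, Pi.single_eq_same, hw, Function.update_self]
      ring
    · intro k _ hk
      rw [h_angle_u, h_angle_w, hw, Function.update_of_ne hk, sub_self]
    · simp
  rw [h_split]
  exact add_nonneg h_limit h_shrink

lemma sum_logAngle_sub_mul_sub_nonneg (u v : Fin 3 → ℝ) :
    0 ≤ ∑ i, (logAngle u i - logAngle v i) * (u i - v i) := by
  have h_comm : ∀ u v : Fin 3 → ℝ, ∑ i, (logAngle u i - logAngle v i) * (u i - v i) =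
      ∑ i, (logAngle v i - logAngle u i) * (v i - u i) := fun u v ↦
    Finset.sum_congr rfl fun i _ ↦ by ring
  refine sum_logAngle_sub_mul_sub_nonneg_of_forall_strictTriangle (fun u hu ↦ ?_) u
  rw [h_comm]
  refine sum_logAngle_sub_mul_sub_nonneg_of_forall_strictTriangle (fun v hv ↦ ?_) v
  exact sum_logAngle_sub_mul_sub_nonneg_of_strictTriangle hv hu

end TriangleAngles

section RicciCurvature

/-- Half the sums of the lengths of opposite edges of a tetrahedron: the logarithms of the side
lengths `triSides l`. -/
def logSides (l : Fin 6 → ℝ) : Fin 3 → ℝ := ![(l 0 + l 5) / 2, (l 1 + l 4) / 2, (l 2 + l 3) / 2]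

lemma dihedral_eq_logAngle (l : Fin 6 → ℝ) (p : Fin 6) :
    dihedral l p = logAngle (logSides l) (quadIndex p) := by
  have h : triSides l = fun k ↦ exp (logSides l k) := by
    funext k
    fin_cases k <;> rfl
  rw [dihedral, h, logAngle]

lemma continuous_dihedral (p : Fin 6) : Continuous fun l ↦ dihedral l p := by
  simp only [dihedral_eq_logAngle]
  have h_sides : Continuous logSides := by
    refine continuous_pi fun k ↦ ?_
    fin_cases k <;> simp only [logSides] <;> fun_prop
  exact (continuous_apply (quadIndex p)).comp (continuous_logAngle.comp h_sides)

lemma sum_dihedral_sub_mul_sub_nonneg (l l' : Fin 6 → ℝ) :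
    0 ≤ ∑ p, (dihedral l p - dihedral l' p) * (l p - l' p) := by
  have h_fold : ∑ p, (dihedral l p - dihedral l' p) * (l p - l' p) =
      2 * ∑ k, (logAngle (logSides l) k - logAngle (logSides l') k) *
        (logSides l k - logSides l' k) := by
    have h_quad : quadIndex = ![0, 1, 2, 2, 1, 0] := by decide
    simp only [Fin.sum_univ_six, Fin.sum_univ_three, dihedral_eq_logAngle, h_quad, logSides,
      Matrix.cons_val]
    ring
  rw [h_fold]
  exact mul_nonneg zero_le_two (sum_logAngle_sub_mul_sub_nonneg _ _)

lemma continuous_Ric [Fintype T] [DecidableEq E] (glue : T → Fin 6 → E) :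
    Continuous (Ric glue) := by
  refine continuous_pi fun e ↦ continuous_const.sub ?_
  refine continuous_finsetSum _ fun σ _ ↦ continuous_finsetSum _ fun p _ ↦ ?_
  refine continuous_if_const _ (fun _ ↦ (continuous_dihedral p).comp ?_) fun _ ↦ continuous_const
  exact continuous_pi fun q ↦ continuous_apply _

lemma sum_Ric_mul [Fintype T] [Fintype E] [DecidableEq E] (glue : T → Fin 6 → E) (l m : E → ℝ) :
    ∑ e, Ric glue l e * m e = 2 * π * ∑ e, m e -
      ∑ σ, ∑ p, dihedral (pullback glue l σ) p * pullback glue m σ p := by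
  simp only [Ric, sub_mul, Finset.sum_sub_distrib, Finset.mul_sum, Finset.sum_mul, ite_mul,
    zero_mul, pullback]
  rw [Finset.sum_comm]
  congr 1
  refine Finset.sum_congr rfl fun σ _ ↦ ?_
  rw [Finset.sum_comm]
  simp only [Finset.sum_ite_eq, Finset.mem_univ, if_true]

lemma sum_Ric_sub_mul_sub_nonpos [Fintype T] [Fintype E] [DecidableEq E] (glue : T → Fin 6 → E)
    (l l' : E → ℝ) : ∑ e, (Ric glue l e - Ric glue l' e) * (l e - l' e) ≤ 0 := by
  have h_sum : ∑ e, (Ric glue l e - Ric glue l' e) * (l e - l' e) =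
      -∑ σ, ∑ p, (dihedral (pullback glue l σ) p - dihedral (pullback glue l' σ) p) *
        (pullback glue l σ p - pullback glue l' σ p) := by
    simp only [sub_mul, Finset.sum_sub_distrib, sum_Ric_mul glue _ fun e ↦ l e - l' e]
    simp only [pullback]
    ring
  rw [h_sum]
  exact neg_nonpos.2 (Finset.sum_nonneg fun σ _ ↦ sum_dihedral_sub_mul_sub_nonneg _ _)

end RicciCurvature

/-- long-time existence and uniqueness of the extended combinatorial Ricci
flow `l'(t) = K̃(l(t))`, for any initial generalized decorated metric `l₀ ∈ ℝ^E`. -/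
theorem extended_ricci_flow_global_existence_uniqueness
    [Fintype T] [Fintype E] [DecidableEq E] [Nonempty T]
    (glue : T → Fin 6 → E) (l₀ : E → ℝ) :
    ∃ l : ℝ → E → ℝ,
      (l 0 = l₀ ∧ ∀ t : ℝ, 0 ≤ t → HasDerivAt l (Ric glue (l t)) t) ∧
      ∀ l' : ℝ → E → ℝ,
        (l' 0 = l₀ ∧ ∀ t : ℝ, 0 ≤ t → HasDerivAt l' (Ric glue (l' t)) t) →
        ∀ t : ℝ, 0 ≤ t → l t = l' t :=
  existence_uniqueness_forward_of_sum_nonpos (sum_Ric_sub_mul_sub_nonpos glue)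
    (continuous_Ric glue) l₀
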